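/- Deriv(𝒫_𝒞) is the disjoint union Deriv(𝒫_𝒞) = Deriv⊕ ⨿ Deriv⊖, where Deriv⊕ = {(X^{⟨u⟩} u, Y^{⟨v⟩} v) : (X.u, Y.v) ∈ Deriv'(𝒫_𝒞)} and Deriv⊖ = {(Y^{⊖·⟨v⟩} v, X^{⊖·⟨u⟩} u) : (X.u, Y.v) ∈ Deriv'(𝒫_𝒞)}; in particular Deriv(𝒫_𝒞) can be entirely reconstructed from Deriv'(𝒫_𝒞). -/

import Mathlib

/-- The two-element sign monoid `{⊕, ⊖}` of variances. -/
inductive Sign : Type where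
  | pos
  | neg
deriving DecidableEq, Repr

/-- Multiplication in the sign monoid (`⊕` is the identity, `⊖ · ⊖ = ⊕`). -/
def Sign.mul : Sign → Sign → Sign
  | .pos, s => s
  | .neg, .pos => .neg
  | .neg, .neg => .pos

/-- Variance of a word in `Σ*`: `⟨ε⟩ = ⊕`, `⟨xw⟩ = ⟨x⟩·⟨w⟩`. -/
def wordSign {L : Type} (sgn : L → Sign) : List L → Sign
  | [] => .pos
  | x :: w => (sgn x).mul (wordSign sgn w)

/-- A derived type variable `α.w` with base type variable `α ∈ 𝒱` and word `w ∈ Σ*`. -/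
structure DTV (V L : Type) : Type where
  base : V
  word : List L

/-- Appending a single field label to a derived type variable: `α.ℓ`. -/
def DTV.app {V L : Type} (α : DTV V L) (ℓ : L) : DTV V L :=
  ⟨α.base, α.word ++ [ℓ]⟩

/-- A constraint: either `VAR X` or `X ⊑ Y` for derived type variables. -/
inductive Constraint (V L : Type) : Type where
  | var : DTV V L → Constraint V L
  | sub : DTV V L → DTV V L → Constraint V L

/-- Entailment `𝒞 ⊢ c`: the least relation containing `𝒞` and closed under the
deduction rules T-Left, T-Right, T-InheritL, T-InheritR, T-Prefix, S-Refl,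
S-Trans, S-Field⊕, S-Field⊖ and S-Pointer. -/
inductive Entails {V L : Type} (sgn : L → Sign) (load store : L)
    (C : Set (Constraint V L)) : Constraint V L → Prop where
  | ax {c} : c ∈ C → Entails sgn load store C c
  | tLeft {α β} : Entails sgn load store C (.sub α β) →
      Entails sgn load store C (.var α)
  | tRight {α β} : Entails sgn load store C (.sub α β) →
      Entails sgn load store C (.var β)
  | tInheritL {α β : DTV V L} {ℓ} : Entails sgn load store C (.sub α β) →
      Entails sgn load store C (.var (α.app ℓ)) →
      Entails sgn load store C (.var (β.app ℓ))
  | tInheritR {α β : DTV V L} {ℓ} : Entails sgn load store C (.sub α β) →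
      Entails sgn load store C (.var (β.app ℓ)) →
      Entails sgn load store C (.var (α.app ℓ))
  | tPrefix {α : DTV V L} {ℓ} : Entails sgn load store C (.var (α.app ℓ)) →
      Entails sgn load store C (.var α)
  | sRefl {α} : Entails sgn load store C (.var α) →
      Entails sgn load store C (.sub α α)
  | sTrans {α β γ} : Entails sgn load store C (.sub α β) →
      Entails sgn load store C (.sub β γ) →
      Entails sgn load store C (.sub α γ)
  | sFieldPos {α β : DTV V L} {ℓ} : Entails sgn load store C (.sub α β) →
      Entails sgn load store C (.var (β.app ℓ)) → sgn ℓ = .pos →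
      Entails sgn load store C (.sub (α.app ℓ) (β.app ℓ))
  | sFieldNeg {α β : DTV V L} {ℓ} : Entails sgn load store C (.sub α β) →
      Entails sgn load store C (.var (β.app ℓ)) → sgn ℓ = .neg →
      Entails sgn load store C (.sub (β.app ℓ) (α.app ℓ))
  | sPointer {α : DTV V L} : Entails sgn load store C (.var (α.app load)) →
      Entails sgn load store C (.var (α.app store)) →
      Entails sgn load store C (.sub (α.app store) (α.app load))

/-- `𝒞` is closed under T-Left, T-Right and T-Prefix. -/
def ClosedTLRP {V L : Type} (C : Set (Constraint V L)) : Prop :=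
  (∀ α β : DTV V L, Constraint.sub α β ∈ C →
      Constraint.var α ∈ C ∧ Constraint.var β ∈ C) ∧
  (∀ (α : DTV V L) (ℓ : L), Constraint.var (α.app ℓ) ∈ C →
      Constraint.var α ∈ C)

/-- Control states of the pushdown system `𝒫_𝒞`:
`Ṽ = ((lhs(𝒱_i) ⨿ rhs(𝒱_i) ⨿ 𝒱_u) × {⊕,⊖}) ∪ {#Start, #End}`.
`lt x a` is `(x_L)^a`, `rt x a` is `(x_R)^a`, `un x a` is `x^a` for
uninteresting `x`. -/
inductive Ctl (V : Type) : Type where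
  | start : Ctl V
  | fin : Ctl V
  | lt : V → Sign → Ctl V
  | rt : V → Sign → Ctl V
  | un : V → Sign → Ctl V

/-- Stack symbols `Σ̃ = Σ ∪ {v^⊕, v^⊖ : v ∈ 𝒱_i}`. -/
inductive StkSym (V L : Type) : Type where
  | lbl : L → StkSym V L
  | tv : V → Sign → StkSym V L

/-- A word of field labels seen as a stack word. -/
def symWord {V L : Type} (u : List L) : List (StkSym V L) :=
  u.map StkSym.lbl

/-- `lhs(x)^a`: tagged `x_L` if `x` is interesting, plain otherwise. -/
def lhsCtl {V : Type} (I : V → Bool) (x : V) (a : Sign) : Ctl V :=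
  if I x then .lt x a else .un x a

/-- `rhs(x)^a`: tagged `x_R` if `x` is interesting, plain otherwise. -/
def rhsCtl {V : Type} (I : V → Bool) (x : V) (a : Sign) : Ctl V :=
  if I x then .rt x a else .un x a

/-- A configuration of an unconstrained pushdown system: a control state
together with a stack word. -/
abbrev PDSConfig (V L : Type) : Type := Ctl V × List (StkSym V L)

/-- A transition rule `⟨X; u⟩ ↪ ⟨Y; v⟩`. -/
abbrev PDSRule (V L : Type) : Type := PDSConfig V L × PDSConfig V L

/-- `rule⊕(p.u ⊑ q.v) = ⟨lhs(p)^{⟨u⟩}; u⟩ ↪ ⟨rhs(q)^{⟨v⟩}; v⟩`. -/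
def rulePos {V L : Type} (I : V → Bool) (sgn : L → Sign)
    (c : DTV V L × DTV V L) : PDSRule V L :=
  ((lhsCtl I c.1.base (wordSign sgn c.1.word), symWord c.1.word),
   (rhsCtl I c.2.base (wordSign sgn c.2.word), symWord c.2.word))

/-- `rule⊖(p.u ⊑ q.v) = ⟨lhs(q)^{⊖·⟨v⟩}; v⟩ ↪ ⟨rhs(p)^{⊖·⟨u⟩}; u⟩`. -/
def ruleNeg {V L : Type} (I : V → Bool) (sgn : L → Sign)
    (c : DTV V L × DTV V L) : PDSRule V L :=
  ((lhsCtl I c.2.base (Sign.neg.mul (wordSign sgn c.2.word)), symWord c.2.word),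
   (rhsCtl I c.1.base (Sign.neg.mul (wordSign sgn c.1.word)), symWord c.1.word))

/-- The transition rules `Δ = Δ_𝒞 ∪ Δ_ptr ∪ Δ_start ∪ Δ_end` of the pushdown
system `𝒫_𝒞` associated to a set `𝒞` of subtype constraints between derived
type variables. -/
def Delta {V L : Type} (I : V → Bool) (sgn : L → Sign) (load store : L)
    (C : Set (DTV V L × DTV V L)) : Set (PDSRule V L) :=
  {r | ∃ c ∈ C, r = rulePos I sgn c ∨ r = ruleNeg I sgn c} ∪
  {r | ∃ v : DTV V L,
      r = rulePos I sgn (v.app store, v.app load) ∨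
      r = ruleNeg I sgn (v.app store, v.app load)} ∪
  {r | ∃ (v : V) (a : Sign), I v ∧
      r = ((.start, [StkSym.tv v a]), (.lt v a, ([] : List (StkSym V L))))} ∪
  {r | ∃ (v : V) (a : Sign), I v ∧
      r = ((.rt v a, ([] : List (StkSym V L))), (.fin, [StkSym.tv v a]))}

/-- One transition step of an unconstrained pushdown system:
`(X, w) ⟶ (Y, w')` iff there is a suffix `s` and a rule `⟨X; u⟩ ↪ ⟨Y; v⟩`
with `w = us` and `w' = vs`. -/
def PDSStep {V L : Type} (Δ : Set (PDSRule V L))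
    (c c' : PDSConfig V L) : Prop :=
  ∃ r ∈ Δ, ∃ s : List (StkSym V L),
    c = (r.1.1, r.1.2 ++ s) ∧ c' = (r.2.1, r.2.2 ++ s)

/-- The reflexive-transitive closure `⟶*` of the transition relation. -/
def PDSSteps {V L : Type} (Δ : Set (PDSRule V L)) :
    PDSConfig V L → PDSConfig V L → Prop :=
  Relation.ReflTransGen (PDSStep Δ)

/-- `Deriv(𝒫_𝒞)`, as a relation on triples `X^a u`: `X, Y` are interesting and
`(#Start, X^a u) ⟶* (#End, Y^b v)`. -/
def Deriv {V L : Type} (I : V → Bool) (sgn : L → Sign) (load store : L)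
    (C : Set (DTV V L × DTV V L)) :
    (V × Sign × List L) → (V × Sign × List L) → Prop :=
  fun p q =>
    I p.1 ∧ I q.1 ∧
      PDSSteps (Delta I sgn load store C)
        (.start, StkSym.tv p.1 p.2.1 :: symWord p.2.2)
        (.fin, StkSym.tv q.1 q.2.1 :: symWord q.2.2)

/-- `Deriv'(𝒫_𝒞) = {(X.u, Y.v) : (X^{⟨u⟩} u, Y^{⟨v⟩} v) ∈ Deriv(𝒫_𝒞)}`. -/
def Deriv' {V L : Type} (I : V → Bool) (sgn : L → Sign) (load store : L)
    (C : Set (DTV V L × DTV V L)) :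
    (V × List L) → (V × List L) → Prop :=
  fun p q =>
    Deriv I sgn load store C (p.1, wordSign sgn p.2, p.2)
      (q.1, wordSign sgn q.2, q.2)

theorem Sign.pos_mul (a : Sign) : Sign.pos.mul a = a := rfl

theorem Sign.mul_pos (a : Sign) : a.mul .pos = a := by
  cases a <;> rfl

theorem Sign.mul_self (a : Sign) : a.mul a = .pos := by
  cases a <;> rfl

theorem Sign.mul_assoc (a b c : Sign) : (a.mul b).mul c = a.mul (b.mul c) := by
  cases a <;> cases b <;> cases c <;> rfl

theorem Sign.neg_mul_neg_mul (a : Sign) : Sign.neg.mul (Sign.neg.mul a) = a := by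
  cases a <;> rfl

theorem Sign.ne_neg_mul (a : Sign) : a ≠ Sign.neg.mul a := by
  cases a <;> simp [Sign.mul]

theorem Sign.eq_or_eq_neg_mul_of_mul_eq_mul {a b c d : Sign} (h : a.mul c = b.mul d) :
    (a = c ∧ b = d) ∨ (a = Sign.neg.mul c ∧ b = Sign.neg.mul d) := by
  cases a <;> cases b <;> cases c <;> cases d <;> simp_all [Sign.mul]

/-- The sign carried by a control state. -/
def Ctl.sign {V : Type} : Ctl V → Sign
  | .start => .pos
  | .fin => .pos
  | .lt _ a => a
  | .rt _ a => a
  | .un _ a => a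

/-- The sign of a stack symbol: the variance of a label, the tag of a type variable. -/
def StkSym.sign {V L : Type} (sgn : L → Sign) : StkSym V L → Sign
  | .lbl ℓ => sgn ℓ
  | .tv _ a => a

/-- The total sign of a configuration: that of the control state times that of the stack. -/
def PDSConfig.sign {V L : Type} (sgn : L → Sign) (c : PDSConfig V L) : Sign :=
  c.1.sign.mul (wordSign (StkSym.sign sgn) c.2)

theorem wordSign_append {L : Type} (sgn : L → Sign) (u v : List L) :
    wordSign sgn (u ++ v) = (wordSign sgn u).mul (wordSign sgn v) := by
  induction u with
  | nil => rfl
  | cons x u ih => simp [wordSign, ih, Sign.mul_assoc]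

theorem wordSign_symWord {V L : Type} (sgn : L → Sign) (u : List L) :
    wordSign (StkSym.sign sgn) (symWord u : List (StkSym V L)) = wordSign sgn u := by
  induction u with
  | nil => rfl
  | cons x u ih => exact congrArg (sgn x).mul ih

theorem sign_lhsCtl {V : Type} (I : V → Bool) (x : V) (a : Sign) :
    (lhsCtl I x a).sign = a := by
  unfold lhsCtl; split <;> rfl

theorem sign_rhsCtl {V : Type} (I : V → Bool) (x : V) (a : Sign) :
    (rhsCtl I x a).sign = a := by
  unfold rhsCtl; split <;> rfl

theorem sign_rulePos {V L : Type} (I : V → Bool) (sgn : L → Sign) (c : DTV V L × DTV V L) :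
    (rulePos I sgn c).1.sign sgn = (rulePos I sgn c).2.sign sgn := by
  simp [PDSConfig.sign, rulePos, sign_lhsCtl, sign_rhsCtl, wordSign_symWord, Sign.mul_self]

theorem sign_ruleNeg {V L : Type} (I : V → Bool) (sgn : L → Sign) (c : DTV V L × DTV V L) :
    (ruleNeg I sgn c).1.sign sgn = (ruleNeg I sgn c).2.sign sgn := by
  simp [PDSConfig.sign, ruleNeg, sign_lhsCtl, sign_rhsCtl, wordSign_symWord, Sign.mul_assoc,
    Sign.mul_self]

theorem sign_eq_of_mem_Delta {V L : Type} {I : V → Bool} {sgn : L → Sign} {load store : L}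
    {C : Set (DTV V L × DTV V L)} {r : PDSRule V L} (hr : r ∈ Delta I sgn load store C) :
    r.1.sign sgn = r.2.sign sgn := by
  rcases hr with ((⟨c, -, rfl | rfl⟩ | ⟨w, rfl | rfl⟩) | ⟨w, a, -, rfl⟩) | ⟨w, a, -, rfl⟩
  · exact sign_rulePos I sgn c
  · exact sign_ruleNeg I sgn c
  · exact sign_rulePos I sgn _
  · exact sign_ruleNeg I sgn _
  · rfl
  · simp [PDSConfig.sign, Ctl.sign, wordSign, StkSym.sign, Sign.pos_mul, Sign.mul_pos]

theorem PDSStep.sign_eq {V L : Type} {I : V → Bool} {sgn : L → Sign} {load store : L}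
    {C : Set (DTV V L × DTV V L)} {c c' : PDSConfig V L}
    (h : PDSStep (Delta I sgn load store C) c c') : c.sign sgn = c'.sign sgn := by
  obtain ⟨r, hr, s, rfl, rfl⟩ := h
  have h := sign_eq_of_mem_Delta hr
  simp only [PDSConfig.sign] at h ⊢
  rw [wordSign_append, wordSign_append, ← Sign.mul_assoc, ← Sign.mul_assoc, h]

/-- The total sign of a configuration is invariant along runs of `𝒫_𝒞`. -/
theorem PDSSteps.sign_eq {V L : Type} {I : V → Bool} {sgn : L → Sign} {load store : L}
    {C : Set (DTV V L × DTV V L)} {c c' : PDSConfig V L}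
    (h : PDSSteps (Delta I sgn load store C) c c') : c.sign sgn = c'.sign sgn := by
  induction h with
  | refl => rfl
  | tail _ hstep ih => exact ih.trans hstep.sign_eq

/-- Duality on control states: exchange left with right and start with end, and flip signs. -/
def Ctl.dual {V : Type} : Ctl V → Ctl V
  | .start => .fin
  | .fin => .start
  | .lt x a => .rt x (Sign.neg.mul a)
  | .rt x a => .lt x (Sign.neg.mul a)
  | .un x a => .un x (Sign.neg.mul a)

/-- Duality on stack symbols: flip the signs of type variables. -/
def StkSym.dual {V L : Type} : StkSym V L → StkSym V L
  | .lbl ℓ => .lbl ℓ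
  | .tv x a => .tv x (Sign.neg.mul a)

/-- Duality on configurations. -/
def PDSConfig.dual {V L : Type} (c : PDSConfig V L) : PDSConfig V L :=
  (c.1.dual, c.2.map StkSym.dual)

theorem map_dual_symWord {V L : Type} (u : List L) :
    (symWord u : List (StkSym V L)).map StkSym.dual = symWord u := by
  simp [symWord, StkSym.dual]

theorem dual_lhsCtl {V : Type} (I : V → Bool) (x : V) (a : Sign) :
    (lhsCtl I x a).dual = rhsCtl I x (Sign.neg.mul a) := by
  unfold lhsCtl rhsCtl; split <;> rfl

theorem dual_rhsCtl {V : Type} (I : V → Bool) (x : V) (a : Sign) :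
    (rhsCtl I x a).dual = lhsCtl I x (Sign.neg.mul a) := by
  unfold lhsCtl rhsCtl; split <;> rfl

theorem dual_rulePos {V L : Type} (I : V → Bool) (sgn : L → Sign) (c : DTV V L × DTV V L) :
    ((rulePos I sgn c).2.dual, (rulePos I sgn c).1.dual) = ruleNeg I sgn c := by
  simp [rulePos, ruleNeg, PDSConfig.dual, dual_lhsCtl, dual_rhsCtl, map_dual_symWord]

theorem dual_ruleNeg {V L : Type} (I : V → Bool) (sgn : L → Sign) (c : DTV V L × DTV V L) :
    ((ruleNeg I sgn c).2.dual, (ruleNeg I sgn c).1.dual) = rulePos I sgn c := by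
  simp [rulePos, ruleNeg, PDSConfig.dual, dual_lhsCtl, dual_rhsCtl, map_dual_symWord,
    Sign.neg_mul_neg_mul]

theorem dual_mem_Delta {V L : Type} {I : V → Bool} {sgn : L → Sign} {load store : L}
    {C : Set (DTV V L × DTV V L)} {r : PDSRule V L} (hr : r ∈ Delta I sgn load store C) :
    (r.2.dual, r.1.dual) ∈ Delta I sgn load store C := by
  rcases hr with ((⟨c, hc, rfl | rfl⟩ | ⟨w, rfl | rfl⟩) | ⟨w, a, hw, rfl⟩) | ⟨w, a, hw, rfl⟩
  · exact .inl (.inl (.inl ⟨c, hc, .inr (dual_rulePos I sgn c)⟩))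
  · exact .inl (.inl (.inl ⟨c, hc, .inl (dual_ruleNeg I sgn c)⟩))
  · exact .inl (.inl (.inr ⟨w, .inr (dual_rulePos I sgn _)⟩))
  · exact .inl (.inl (.inr ⟨w, .inl (dual_ruleNeg I sgn _)⟩))
  · exact .inr ⟨w, Sign.neg.mul a, hw, rfl⟩
  · exact .inl (.inr ⟨w, Sign.neg.mul a, hw, rfl⟩)

theorem PDSStep.dual {V L : Type} {I : V → Bool} {sgn : L → Sign} {load store : L}
    {C : Set (DTV V L × DTV V L)} {c c' : PDSConfig V L}
    (h : PDSStep (Delta I sgn load store C) c c') :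
    PDSStep (Delta I sgn load store C) c'.dual c.dual := by
  obtain ⟨r, hr, s, rfl, rfl⟩ := h
  exact ⟨_, dual_mem_Delta hr, s.map StkSym.dual, by simp [PDSConfig.dual],
    by simp [PDSConfig.dual]⟩

/-- Runs of `𝒫_𝒞` dualize to runs in the opposite direction. -/
theorem PDSSteps.dual {V L : Type} {I : V → Bool} {sgn : L → Sign} {load store : L}
    {C : Set (DTV V L × DTV V L)} {c c' : PDSConfig V L}
    (h : PDSSteps (Delta I sgn load store C) c c') :
    PDSSteps (Delta I sgn load store C) c'.dual c.dual := by
  induction h with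
  | refl => exact .refl
  | tail _ hstep ih => exact .head hstep.dual ih

theorem Deriv.dual {V L : Type} {I : V → Bool} {sgn : L → Sign} {load store : L}
    {C : Set (DTV V L × DTV V L)} {X Y : V} {a b : Sign} {u v : List L}
    (h : Deriv I sgn load store C (X, a, u) (Y, b, v)) :
    Deriv I sgn load store C (Y, Sign.neg.mul b, v) (X, Sign.neg.mul a, u) := by
  obtain ⟨hX, hY, h⟩ := h
  refine ⟨hY, hX, ?_⟩
  simpa [PDSConfig.dual, Ctl.dual, StkSym.dual, map_dual_symWord] using h.dual

theorem Deriv.mul_wordSign_eq {V L : Type} {I : V → Bool} {sgn : L → Sign} {load store : L}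
    {C : Set (DTV V L × DTV V L)} {X Y : V} {a b : Sign} {u v : List L}
    (h : Deriv I sgn load store C (X, a, u) (Y, b, v)) :
    a.mul (wordSign sgn u) = b.mul (wordSign sgn v) := by
  simpa [PDSConfig.sign, Ctl.sign, wordSign, StkSym.sign, wordSign_symWord, Sign.pos_mul]
    using h.2.2.sign_eq

/-- `Deriv(𝒫_𝒞)` is the disjoint union `Deriv⊕ ⨿ Deriv⊖`, where
`Deriv⊕ = {(X^{⟨u⟩} u, Y^{⟨v⟩} v) : (X.u, Y.v) ∈ Deriv'(𝒫_𝒞)}` and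
`Deriv⊖ = {(Y^{⊖·⟨v⟩} v, X^{⊖·⟨u⟩} u) : (X.u, Y.v) ∈ Deriv'(𝒫_𝒞)}`; in
particular `Deriv(𝒫_𝒞)` can be entirely reconstructed from `Deriv'(𝒫_𝒞)`. -/
theorem deriv_eq_derivPos_disjUnion_derivNeg {V L : Type} (I : V → Bool)
    (sgn : L → Sign) (load store : L)
    (hload : sgn load = .pos) (hstore : sgn store = .neg)
    (C : Set (DTV V L × DTV V L))
    (X Y : V) (a b : Sign) (u v : List L) :
    (Deriv I sgn load store C (X, a, u) (Y, b, v) ↔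
      ((a = wordSign sgn u ∧ b = wordSign sgn v ∧
          Deriv' I sgn load store C (X, u) (Y, v)) ∨
       (a = Sign.neg.mul (wordSign sgn u) ∧ b = Sign.neg.mul (wordSign sgn v) ∧
          Deriv' I sgn load store C (Y, v) (X, u)))) ∧
    ¬((a = wordSign sgn u ∧ b = wordSign sgn v ∧
          Deriv' I sgn load store C (X, u) (Y, v)) ∧
      (a = Sign.neg.mul (wordSign sgn u) ∧ b = Sign.neg.mul (wordSign sgn v) ∧
          Deriv' I sgn load store C (Y, v) (X, u))) := by
  refine ⟨⟨fun h => ?_, ?_⟩, fun ⟨⟨ha, _⟩, ha', _⟩ => Sign.ne_neg_mul _ (ha.symm.trans ha')⟩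
  · rcases Sign.eq_or_eq_neg_mul_of_mul_eq_mul h.mul_wordSign_eq with ⟨rfl, rfl⟩ | ⟨rfl, rfl⟩
    · exact .inl ⟨rfl, rfl, h⟩
    · refine .inr ⟨rfl, rfl, ?_⟩
      have h := h.dual
      rwa [Sign.neg_mul_neg_mul, Sign.neg_mul_neg_mul] at h
  · rintro (⟨rfl, rfl, h⟩ | ⟨rfl, rfl, h⟩)
    · exact h
    · exact Deriv.dual h
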